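/- arXiv:1309.5865 — 2 statements merged into one kernel-verified Lean document; each statement's English description precedes it below -/
import Mathlib

section
/- The sequence I_n = ∫₀^∞ ∫₀^∞ ((1+x+y)(1+1/x+1/y))^{−n−1} dx dy/(xy) satisfies the Apéry-like recursion n² I_{n−1} − (3 + 10n + 10n²) I_n + 9(n+1)² I_{n+1} = 0 for all n ≥ 1. -/
open MeasureTheory Set

/-- The moments `I_n = ∫₀^∞∫₀^∞ ((1+x+y)(1+1/x+1/y))^{−n−1} dx dy/(xy)`. -/
noncomputable def sunsetMoment (n : ℕ) : ℝ :=
  ∫ p in (Ioi (0 : ℝ) ×ˢ Ioi (0 : ℝ)),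
    ((1 + p.1 + p.2) * (1 + 1/p.1 + 1/p.2)) ^ (-(n : ℤ) - 1) / (p.1 * p.2)

/-- The sunset Laurent polynomial `(1+x+y)(1+1/x+1/y)`. -/
noncomputable def sunsetPoly (x y : ℝ) : ℝ := (1 + x + y) * (1 + 1 / x + 1 / y)

/-- The logarithmic derivative `y ∂/∂y` of `sunsetPoly`. -/
noncomputable def sunsetPolyTheta (x y : ℝ) : ℝ := y + y / x - 1 / y - x / y

/-- Numerator of the telescoping certificate for the recursion. -/
noncomputable def certificateNum (n : ℕ) (x y : ℝ) : ℝ :=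
  -(1 / 2) * ((5 + 6 * n) * (x - 1 / x) + n * (y / x ^ 2 - x ^ 2 / y)
    + (4 * n - 1) * (y / x - x / y) + (4 + 11 * n) * (y - 1 / y)
    + (4 + 6 * n) * (x * y - 1 / (x * y)) + n * (y ^ 2 / x ^ 2 - x ^ 2 / y ^ 2)
    + (1 + 4 * n) * (y ^ 2 / x - x / y ^ 2) + 2 * n * (y ^ 2 - 1 / y ^ 2))

/-- The logarithmic derivative `y ∂/∂y` of `certificateNum`. -/
noncomputable def certificateNumTheta (n : ℕ) (x y : ℝ) : ℝ :=
  -(1 / 2) * (n * (y / x ^ 2 + x ^ 2 / y)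
    + (4 * n - 1) * (y / x + x / y) + (4 + 11 * n) * (y + 1 / y)
    + (4 + 6 * n) * (x * y + 1 / (x * y)) + 2 * n * (y ^ 2 / x ^ 2 + x ^ 2 / y ^ 2)
    + 2 * (1 + 4 * n) * (y ^ 2 / x + x / y ^ 2) + 4 * n * (y ^ 2 + 1 / y ^ 2))

/-- The density of the exact form attached to the certificate, that is
`(1 / x) ∂/∂y (certificateNum / sunsetPoly ^ (n + 2))`. -/
noncomputable def certificateDensity (n : ℕ) (x y : ℝ) : ℝ :=
  (sunsetPoly x y * certificateNumTheta n x y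
    - (n + 2) * certificateNum n x y * sunsetPolyTheta x y)
    / (sunsetPoly x y ^ (n + 3) * (x * y))

lemma sunsetPoly_eq {x y : ℝ} (hx : 0 < x) (hy : 0 < y) :
    sunsetPoly x y = 3 + x + y + 1 / x + 1 / y + x / y + y / x := by
  unfold sunsetPoly
  field_simp
  ring

lemma one_le_sunsetPoly {x y : ℝ} (hx : 0 < x) (hy : 0 < y) : 1 ≤ sunsetPoly x y := by
  rw [sunsetPoly_eq hx hy]
  have : 0 < x + y + 1 / x + 1 / y + x / y + y / x := by positivity
  linarith

lemma sunsetPoly_pos {x y : ℝ} (hx : 0 < x) (hy : 0 < y) : 0 < sunsetPoly x y :=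
  zero_lt_one.trans_le (one_le_sunsetPoly hx hy)

lemma sunsetPoly_comm (x y : ℝ) : sunsetPoly y x = sunsetPoly x y := by
  unfold sunsetPoly
  ring

lemma abs_sunsetPolyTheta_le {x y : ℝ} (hx : 0 < x) (hy : 0 < y) :
    |sunsetPolyTheta x y| ≤ sunsetPoly x y := by
  rw [sunsetPoly_eq hx hy, sunsetPolyTheta, abs_le]
  have h1 : 0 < 1 / x := by positivity
  have h2 : 0 < 1 / y := by positivity
  have h3 : 0 < x / y := by positivity
  have h4 : 0 < y / x := by positivity
  constructor <;> linarith

/-- Every Laurent monomial in the certificate is dominated by the square of `sunsetPoly`. -/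
lemma monomials_le_sunsetPoly_sq {x y : ℝ} (hx : 0 < x) (hy : 0 < y) :
    (x + 1 / x) + (y / x ^ 2 + x ^ 2 / y) + (y / x + x / y) + (y + 1 / y)
      + (x * y + 1 / (x * y)) + (y ^ 2 / x ^ 2 + x ^ 2 / y ^ 2)
      + (y ^ 2 / x + x / y ^ 2) + (y ^ 2 + 1 / y ^ 2) ≤ sunsetPoly x y ^ 2 := by
  have key : sunsetPoly x y ^ 2 - ((x + 1 / x) + (y / x ^ 2 + x ^ 2 / y) + (y / x + x / y)
      + (y + 1 / y) + (x * y + 1 / (x * y)) + (y ^ 2 / x ^ 2 + x ^ 2 / y ^ 2)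
      + (y ^ 2 / x + x / y ^ 2) + (y ^ 2 + 1 / y ^ 2))
      = 15 + 7 * (x + 1 / x) + (y / x ^ 2 + x ^ 2 / y) + 7 * (y / x + x / y)
        + 7 * (y + 1 / y) + (x * y + 1 / (x * y))
        + (y ^ 2 / x + x / y ^ 2) + (x ^ 2 + 1 / x ^ 2) := by
    rw [sunsetPoly_eq hx hy]
    field_simp
    ring
  have : 0 ≤ 15 + 7 * (x + 1 / x) + (y / x ^ 2 + x ^ 2 / y) + 7 * (y / x + x / y)
        + 7 * (y + 1 / y) + (x * y + 1 / (x * y))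
        + (y ^ 2 / x + x / y ^ 2) + (x ^ 2 + 1 / x ^ 2) := by positivity
  linarith

lemma abs_certificateNum_le_and_theta_le (n : ℕ) {x y : ℝ} (hx : 0 < x) (hy : 0 < y) :
    |certificateNum n x y| ≤ (5 + 11 * n) * sunsetPoly x y ^ 2 ∧
      |certificateNumTheta n x y| ≤ (5 + 11 * n) * sunsetPoly x y ^ 2 := by
  have hn : (0 : ℝ) ≤ n := n.cast_nonneg
  have hM := mul_le_mul_of_nonneg_left (monomials_le_sunsetPoly_sq hx hy)
    (show (0 : ℝ) ≤ 5 + 11 * n by positivity)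
  have nonneg_pair : ∀ m : ℝ, 0 < m → 0 ≤ m ∧ 0 ≤ n * m := fun m hm => ⟨hm.le, by positivity⟩
  obtain ⟨p0, q0⟩ := nonneg_pair (x) (by positivity)
  obtain ⟨p1, q1⟩ := nonneg_pair (1 / x) (by positivity)
  obtain ⟨p2, q2⟩ := nonneg_pair (y / x ^ 2) (by positivity)
  obtain ⟨p3, q3⟩ := nonneg_pair (x ^ 2 / y) (by positivity)
  obtain ⟨p4, q4⟩ := nonneg_pair (y / x) (by positivity)
  obtain ⟨p5, q5⟩ := nonneg_pair (x / y) (by positivity)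
  obtain ⟨p6, q6⟩ := nonneg_pair (y) (by positivity)
  obtain ⟨p7, q7⟩ := nonneg_pair (1 / y) (by positivity)
  obtain ⟨p8, q8⟩ := nonneg_pair (x * y) (by positivity)
  obtain ⟨p9, q9⟩ := nonneg_pair (1 / (x * y)) (by positivity)
  obtain ⟨p10, q10⟩ := nonneg_pair (y ^ 2 / x ^ 2) (by positivity)
  obtain ⟨p11, q11⟩ := nonneg_pair (x ^ 2 / y ^ 2) (by positivity)
  obtain ⟨p12, q12⟩ := nonneg_pair (y ^ 2 / x) (by positivity)
  obtain ⟨p13, q13⟩ := nonneg_pair (x / y ^ 2) (by positivity)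
  obtain ⟨p14, q14⟩ := nonneg_pair (y ^ 2) (by positivity)
  obtain ⟨p15, q15⟩ := nonneg_pair (1 / y ^ 2) (by positivity)
  unfold certificateNum certificateNumTheta
  refine ⟨(abs_le.2 ?_).trans hM, (abs_le.2 ?_).trans hM⟩ <;> constructor <;> linarith

lemma integrableOn_inv_sqrt_mul_one_add :
    IntegrableOn (fun x : ℝ => 1 / (√x * (1 + x))) (Ioi 0) := by
  refine integrableOn_Ioi_deriv_of_nonneg (g := fun x => 2 * Real.arctan √x)
    (l := 2 * (Real.pi / 2)) ?_ ?_ ?_ ?_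
  · exact Continuous.continuousWithinAt (by fun_prop)
  · intro x hx
    have hx : 0 < x := hx
    have h := ((Real.hasDerivAt_sqrt hx.ne').arctan).const_mul 2
    refine h.congr_deriv ?_
    rw [Real.sq_sqrt hx.le]
    field_simp
  · intro x hx
    have hx : 0 < x := hx
    positivity
  · exact ((tendsto_nhds_of_tendsto_nhdsWithin Real.tendsto_arctan_atTop).comp
      Real.tendsto_sqrt_atTop).const_mul 2

lemma one_div_sunsetPoly_mul_le {x y : ℝ} (hx : 0 < x) (hy : 0 < y) :
    1 / (sunsetPoly x y * (x * y)) ≤ 1 / (√x * (1 + x)) * (1 / (√y * (1 + y))) := by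
  rw [one_div_mul_one_div]
  refine one_div_le_one_div_of_le (by positivity) ?_
  have h : sunsetPoly x y * (x * y) = (1 + x + y) * (x * y + x + y) := by
    unfold sunsetPoly
    field_simp
    ring
  rw [h]
  refine abs_le_of_sq_le_sq' ?_ (by positivity) |>.2
  have e : (√x * (1 + x) * (√y * (1 + y))) ^ 2
      = ((1 + x) * (1 + y)) * (x * y * ((1 + x) * (1 + y))) := by
    rw [mul_pow, mul_pow, mul_pow, Real.sq_sqrt hx.le, Real.sq_sqrt hy.le]
    ring
  rw [e, mul_pow]
  have hxy : 0 < x * y := by positivity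
  have hxxy : 0 < x * (x * y) := by positivity
  have hyxy : 0 < y * (x * y) := by positivity
  gcongr
  · nlinarith
  · nlinarith

/-- A measurable function dominated by `1 / (sunsetPoly * x * y)` is integrable on the quadrant. -/
lemma integrableOn_quadrant_of_bound {f : ℝ × ℝ → ℝ} (hf : Measurable f) (C : ℝ)
    (hC : ∀ x y, 0 < x → 0 < y → |f (x, y)| ≤ C * (1 / (sunsetPoly x y * (x * y)))) :
    IntegrableOn f (Ioi 0 ×ˢ Ioi 0) := by
  have hg : IntegrableOn
      (fun p : ℝ × ℝ => |C| * (1 / (√p.1 * (1 + p.1)) * (1 / (√p.2 * (1 + p.2)))))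
      (Ioi 0 ×ˢ Ioi 0) := by
    have := integrableOn_inv_sqrt_mul_one_add.mul_prod integrableOn_inv_sqrt_mul_one_add
    rw [Measure.prod_restrict] at this
    exact this.const_mul |C|
  refine hg.mono' hf.aestronglyMeasurable ?_
  filter_upwards [ae_restrict_mem (measurableSet_Ioi.prod measurableSet_Ioi)] with p hp
  obtain ⟨hx, hy⟩ : 0 < p.1 ∧ 0 < p.2 := hp
  have hw := sunsetPoly_pos hx hy
  refine (hC p.1 p.2 hx hy).trans ?_
  exact mul_le_mul (le_abs_self C) (one_div_sunsetPoly_mul_le hx hy) (by positivity) (abs_nonneg C)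

lemma hasDerivAt_sunsetPoly {x y : ℝ} (hx : 0 < x) (hy : 0 < y) :
    HasDerivAt (fun t => sunsetPoly x t) (sunsetPolyTheta x y / y) y := by
  unfold sunsetPoly sunsetPolyTheta
  have h := ((hasDerivAt_id' y).const_add (1 + x)).mul
    (((hasDerivAt_inv hy.ne').const_add (1 + 1 / x)))
  simp only [one_div _] at h ⊢
  refine h.congr_deriv ?_
  field_simp
  ring

lemma hasDerivAt_certificateNum (n : ℕ) {x y : ℝ} (hx : 0 < x) (hy : 0 < y) :
    HasDerivAt (fun t => certificateNum n x t) (certificateNumTheta n x y / y) y := by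
  have h1 := hasDerivAt_id' y
  have hi := hasDerivAt_inv hy.ne'
  have h2 := h1.pow 2
  have hi2 := hi.pow 2
  unfold certificateNum certificateNumTheta
  have h := ((((((((hasDerivAt_const y ((5 + 6 * (n : ℝ)) * (x - 1 / x))).add
    (((h1.div_const (x ^ 2)).sub (hi.const_mul (x ^ 2))).const_mul (n : ℝ))).add
    (((h1.div_const x).sub (hi.const_mul x)).const_mul (4 * (n : ℝ) - 1))).add
    ((h1.sub hi).const_mul (4 + 11 * (n : ℝ)))).add
    (((h1.const_mul x).sub (hi.const_mul x⁻¹)).const_mul (4 + 6 * (n : ℝ)))).add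
    (((h2.div_const (x ^ 2)).sub (hi2.const_mul (x ^ 2))).const_mul (n : ℝ))).add
    (((h2.div_const x).sub (hi2.const_mul x)).const_mul (1 + 4 * (n : ℝ)))).add
    ((h2.sub hi2).const_mul (2 * (n : ℝ)))).const_mul (-(1 / 2) : ℝ)
  refine (h.congr_deriv ?_).congr_of_eventuallyEq ?_
  · simp only [Nat.add_one_sub_one, pow_one, Nat.cast_ofNat]
    field_simp
    ring
  · refine Filter.Eventually.of_forall fun t => ?_
    simp only [Pi.add_apply, Pi.sub_apply, Pi.pow_apply]
    ring

lemma hasDerivAt_certificate (n : ℕ) {x y : ℝ} (hx : 0 < x) (hy : 0 < y) :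
    HasDerivAt (fun t => certificateNum n x t / sunsetPoly x t ^ (n + 2))
      (x * certificateDensity n x y) y := by
  have hw := sunsetPoly_pos hx hy
  have h := (hasDerivAt_certificateNum n hx hy).div ((hasDerivAt_sunsetPoly hx hy).pow (n + 2))
    (pow_pos hw _).ne'
  refine h.congr_deriv ?_
  unfold certificateDensity
  simp only [Nat.cast_add, Nat.cast_ofNat, Pi.pow_apply, show n + 2 - 1 = n + 1 by omega]
  field_simp
  ring

/-- The recursion holds pointwise up to the two exact terms. -/
lemma recursion_integrand_eq (n : ℕ) {x y : ℝ} (hx : 0 < x) (hy : 0 < y) :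
    (n : ℝ) ^ 2 * (1 / (sunsetPoly x y ^ n * (x * y)))
      - (3 + 10 * n + 10 * n ^ 2) * (1 / (sunsetPoly x y ^ (n + 1) * (x * y)))
      + 9 * ((n : ℝ) + 1) ^ 2 * (1 / (sunsetPoly x y ^ (n + 2) * (x * y)))
      = certificateDensity n x y + certificateDensity n y x := by
  have hw := sunsetPoly_pos hx hy
  have key : (n : ℝ) ^ 2 * sunsetPoly x y ^ 3
      - (3 + 10 * n + 10 * n ^ 2) * sunsetPoly x y ^ 2 + 9 * ((n : ℝ) + 1) ^ 2 * sunsetPoly x y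
      = (sunsetPoly x y * certificateNumTheta n x y
          - (n + 2) * certificateNum n x y * sunsetPolyTheta x y)
        + (sunsetPoly x y * certificateNumTheta n y x
          - (n + 2) * certificateNum n y x * sunsetPolyTheta y x) := by
    unfold sunsetPoly certificateNumTheta certificateNum sunsetPolyTheta
    field_simp
    ring
  unfold certificateDensity
  rw [sunsetPoly_comm x y, mul_comm y x, ← add_div, ← key]
  field_simp
  ring

lemma abs_certificate_le (n : ℕ) (hn : 1 ≤ n) {x y : ℝ} (hx : 0 < x) (hy : 0 < y) :
    |certificateNum n x y / sunsetPoly x y ^ (n + 2)| ≤ (5 + 11 * n) / sunsetPoly x y := by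
  have hw := sunsetPoly_pos hx hy
  have hw1 : sunsetPoly x y ≤ sunsetPoly x y ^ n :=
    le_self_pow₀ (one_le_sunsetPoly hx hy) (by omega)
  rw [abs_div, abs_of_pos (pow_pos hw _), div_le_div_iff₀ (by positivity) hw]
  calc |certificateNum n x y| * sunsetPoly x y
      ≤ ((5 + 11 * n) * sunsetPoly x y ^ 2) * sunsetPoly x y ^ n := by
        gcongr
        exact (abs_certificateNum_le_and_theta_le n hx hy).1
    _ = _ := by ring

lemma abs_certificateDensity_le (n : ℕ) (hn : 1 ≤ n) {x y : ℝ} (hx : 0 < x) (hy : 0 < y) :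
    |certificateDensity n x y|
      ≤ (5 + 11 * n) * (n + 3) * (1 / (sunsetPoly x y * (x * y))) := by
  have hw := sunsetPoly_pos hx hy
  have hw1 : sunsetPoly x y ≤ sunsetPoly x y ^ n :=
    le_self_pow₀ (one_le_sunsetPoly hx hy) (by omega)
  obtain ⟨hP, hT⟩ := abs_certificateNum_le_and_theta_le n hx hy
  have hθ := abs_sunsetPolyTheta_le hx hy
  have hnum : |sunsetPoly x y * certificateNumTheta n x y
      - (n + 2) * certificateNum n x y * sunsetPolyTheta x y|
      ≤ (5 + 11 * n) * (n + 3) * sunsetPoly x y ^ 3 := by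
    calc _ ≤ sunsetPoly x y * |certificateNumTheta n x y|
          + (n + 2) * |certificateNum n x y| * |sunsetPolyTheta x y| := by
          refine (abs_sub _ _).trans_eq ?_
          rw [abs_mul, abs_mul, abs_mul, abs_of_pos hw,
            abs_of_pos (show (0 : ℝ) < n + 2 by positivity)]
      _ ≤ sunsetPoly x y * ((5 + 11 * n) * sunsetPoly x y ^ 2)
          + (n + 2) * ((5 + 11 * n) * sunsetPoly x y ^ 2) * sunsetPoly x y := by gcongr
      _ = _ := by ring
  unfold certificateDensity
  rw [abs_div, abs_of_pos (show 0 < sunsetPoly x y ^ (n + 3) * (x * y) by positivity),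
    mul_one_div, div_le_div_iff₀ (by positivity) (by positivity)]
  calc _ ≤ ((5 + 11 * n) * (n + 3) * sunsetPoly x y ^ 3) * (sunsetPoly x y ^ n * (x * y)) := by
        gcongr
    _ = _ := by ring

lemma measurable_certificateDensity (n : ℕ) :
    Measurable fun p : ℝ × ℝ => certificateDensity n p.1 p.2 := by
  unfold certificateDensity sunsetPoly certificateNum certificateNumTheta sunsetPolyTheta
  fun_prop

lemma integrableOn_certificateDensity (n : ℕ) (hn : 1 ≤ n) :
    IntegrableOn (fun p : ℝ × ℝ => certificateDensity n p.1 p.2) (Ioi 0 ×ˢ Ioi 0) :=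
  integrableOn_quadrant_of_bound (measurable_certificateDensity n) _
    fun _ _ hx hy => abs_certificateDensity_le n hn hx hy

lemma tendsto_certificate_nhdsGT_zero (n : ℕ) (hn : 1 ≤ n) {x : ℝ} (hx : 0 < x) :
    Filter.Tendsto (fun y => certificateNum n x y / sunsetPoly x y ^ (n + 2))
      (nhdsWithin 0 (Ioi 0)) (nhds 0) := by
  have h0 : Filter.Tendsto (fun y : ℝ => (5 + 11 * n) * y) (nhdsWithin 0 (Ioi 0)) (nhds 0) := by
    have : Continuous fun y : ℝ => (5 + 11 * (n : ℝ)) * y := by fun_prop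
    simpa using (this.tendsto 0).mono_left nhdsWithin_le_nhds
  refine squeeze_zero_norm' ?_ h0
  filter_upwards [self_mem_nhdsWithin] with y (hy : 0 < y)
  refine (abs_certificate_le n hn hx hy).trans ?_
  rw [div_eq_mul_inv]
  gcongr
  rw [inv_le_comm₀ (sunsetPoly_pos hx hy) hy, sunsetPoly_eq hx hy, ← one_div]
  have : 0 < 3 + x + y + 1 / x + x / y + y / x := by positivity
  linarith

lemma tendsto_certificate_atTop (n : ℕ) (hn : 1 ≤ n) {x : ℝ} (hx : 0 < x) :
    Filter.Tendsto (fun y => certificateNum n x y / sunsetPoly x y ^ (n + 2))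
      Filter.atTop (nhds 0) := by
  have h0 : Filter.Tendsto (fun y : ℝ => (5 + 11 * n) / y) Filter.atTop (nhds 0) :=
    Filter.tendsto_id.const_div_atTop _
  refine squeeze_zero_norm' ?_ h0
  filter_upwards [Filter.eventually_gt_atTop 0] with y hy
  refine (abs_certificate_le n hn hx hy).trans ?_
  gcongr
  rw [sunsetPoly_eq hx hy]
  have : 0 < 3 + x + 1 / x + 1 / y + x / y + y / x := by positivity
  linarith

lemma integral_certificateDensity (n : ℕ) (hn : 1 ≤ n) :
    ∫ p in Ioi (0 : ℝ) ×ˢ Ioi (0 : ℝ), certificateDensity n p.1 p.2 = 0 := by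
  have hint := integrableOn_certificateDensity n hn
  have hae : ∀ᵐ x ∂volume.restrict (Ioi (0 : ℝ)),
      IntegrableOn (fun y => certificateDensity n x y) (Ioi 0) := by
    rw [IntegrableOn, Measure.volume_eq_prod, ← Measure.prod_restrict] at hint
    exact hint.prod_right_ae
  rw [Measure.volume_eq_prod, setIntegral_prod _ hint]
  refine integral_eq_zero_of_ae ?_
  filter_upwards [hae, ae_restrict_mem measurableSet_Ioi] with x hxi (hx : 0 < x)
  have h := integral_Ioi_deriv_mul_eq_sub (a := 0) (a' := 0) (b' := 0)
    (u := fun y => certificateNum n x y / sunsetPoly x y ^ (n + 2))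
    (u' := fun y => x * certificateDensity n x y) (v := fun _ => (1 : ℝ)) (v' := fun _ => 0)
    (fun y hy => hasDerivAt_certificate n hx hy) (fun y _ => hasDerivAt_const y 1)
    (by simpa [Pi.mul_def, Pi.add_def, IntegrableOn] using hxi.const_mul x)
    (by simpa [Pi.mul_def] using tendsto_certificate_nhdsGT_zero n hn hx)
    (by simpa [Pi.mul_def] using tendsto_certificate_atTop n hn hx)
  simp only [mul_one, mul_zero, add_zero, sub_zero, integral_const_mul] at h
  exact (mul_eq_zero.1 h).resolve_left hx.ne'

lemma integral_certificateDensity_swap (n : ℕ) (hn : 1 ≤ n) :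
    ∫ p in Ioi (0 : ℝ) ×ˢ Ioi (0 : ℝ), certificateDensity n p.2 p.1 = 0 :=
  (setIntegral_prod_swap (μ := volume) (ν := volume) (Ioi (0 : ℝ)) (Ioi (0 : ℝ))
    fun p : ℝ × ℝ => certificateDensity n p.1 p.2).trans (integral_certificateDensity n hn)

lemma integrableOn_certificateDensity_swap (n : ℕ) (hn : 1 ≤ n) :
    IntegrableOn (fun p : ℝ × ℝ => certificateDensity n p.2 p.1) (Ioi 0 ×ˢ Ioi 0) :=
  integrableOn_quadrant_of_bound ((measurable_certificateDensity n).comp measurable_swap) _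
    fun x y hx hy => by
      rw [← sunsetPoly_comm, mul_comm x y]
      exact abs_certificateDensity_le n hn hy hx

lemma sunsetMoment_eq (n : ℕ) :
    sunsetMoment n = ∫ p in Ioi (0 : ℝ) ×ˢ Ioi (0 : ℝ),
      1 / (sunsetPoly p.1 p.2 ^ (n + 1) * (p.1 * p.2)) := by
  unfold sunsetMoment
  congr 1
  ext p
  rw [← sunsetPoly, show -(n : ℤ) - 1 = -((n + 1 : ℕ) : ℤ) by push_cast; ring, zpow_neg,
    zpow_natCast, one_div, mul_inv, div_eq_mul_inv]

lemma integrableOn_sunsetMoment (n : ℕ) :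
    IntegrableOn (fun p : ℝ × ℝ => 1 / (sunsetPoly p.1 p.2 ^ (n + 1) * (p.1 * p.2)))
      (Ioi 0 ×ˢ Ioi 0) := by
  refine integrableOn_quadrant_of_bound ?_ 1 fun x y hx hy => ?_
  · unfold sunsetPoly
    fun_prop
  · have hw := sunsetPoly_pos hx hy
    have hw1 : sunsetPoly x y ≤ sunsetPoly x y ^ (n + 1) :=
      le_self_pow₀ (one_le_sunsetPoly hx hy) (by omega)
    rw [abs_of_pos (by positivity), one_mul]
    gcongr

theorem sunsetMoment_apery_recursion (n : ℕ) (hn : 1 ≤ n) :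
    (n : ℝ) ^ 2 * sunsetMoment (n - 1)
      - (3 + 10 * n + 10 * n ^ 2) * sunsetMoment n
      + 9 * ((n : ℝ) + 1) ^ 2 * sunsetMoment (n + 1) = 0 := by
  have i0 := (integrableOn_sunsetMoment (n - 1)).const_mul ((n : ℝ) ^ 2)
  have i1 := (integrableOn_sunsetMoment n).const_mul (3 + 10 * (n : ℝ) + 10 * n ^ 2)
  have i2 := (integrableOn_sunsetMoment (n + 1)).const_mul (9 * ((n : ℝ) + 1) ^ 2)
  rw [sunsetMoment_eq, sunsetMoment_eq, sunsetMoment_eq, ← integral_const_mul,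
    ← integral_const_mul, ← integral_const_mul, ← integral_sub i0 i1]
  refine (integral_add (i0.sub i1) i2).symm.trans ?_
  calc _ = ∫ p in Ioi (0 : ℝ) ×ˢ Ioi (0 : ℝ),
        (certificateDensity n p.1 p.2 + certificateDensity n p.2 p.1) := by
        refine setIntegral_congr_fun (measurableSet_Ioi.prod measurableSet_Ioi) fun p hp => ?_
        simpa only [Pi.sub_apply, Nat.sub_add_cancel hn] using recursion_integrand_eq n hp.1 hp.2
    _ = 0 := by
        rw [integral_add (integrableOn_certificateDensity n hn)
          (integrableOn_certificateDensity_swap n hn), integral_certificateDensity n hn,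
          integral_certificateDensity_swap n hn, add_zero]
end

section
/- For real x with 0 < |x| < 1, Σ_{n≥0} C(2n+3, 2n+1) ζ(2n+4) (−x)^{2n+1} = −1/(2x³) + (π³/2)·cos(πx)/sin(πx)³, where ζ is the Riemann zeta function and C(·,·) the binomial coefficient. -/
open Real

/-- The pair of terms of order `m` with poles at `±(k + 1)` in the Mittag-Leffler expansion of
the derivatives of `π cot (π y)`. -/
noncomputable def cotPolePair (m k : ℕ) (y : ℝ) : ℝ :=
  ((y - (k + 1)) ^ m)⁻¹ + ((y + (k + 1)) ^ m)⁻¹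

lemma summable_inv_succ_sq : Summable fun k : ℕ => (((k : ℝ) + 1) ^ 2)⁻¹ := by
  have h := (summable_nat_add_iff 1).mpr (Real.summable_nat_pow_inv.mpr one_lt_two)
  simpa using h

lemma sub_succ_ne_zero_and_add_succ_ne_zero {y : ℝ} (hy : |y| < 1) (k : ℕ) :
    y - (k + 1) ≠ 0 ∧ y + (k + 1) ≠ 0 := by
  have hk : (0 : ℝ) ≤ k := k.cast_nonneg
  obtain ⟨h1, h2⟩ := abs_lt.mp hy
  exact ⟨by linarith, by linarith⟩

lemma hasDerivAt_cotPolePair (m k : ℕ) {y : ℝ} (hy : |y| < 1) :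
    HasDerivAt (cotPolePair m k) (-m * cotPolePair (m + 1) k y) y := by
  obtain ⟨h1, h2⟩ := sub_succ_ne_zero_and_add_succ_ne_zero hy k
  have key : ∀ c : ℝ, y + c ≠ 0 →
      HasDerivAt (fun z : ℝ => ((z + c) ^ m)⁻¹) (-m * ((y + c) ^ (m + 1))⁻¹) y := by
    intro c hc
    convert! (((hasDerivAt_id y).add_const c).pow m).inv (pow_ne_zero m hc) using 1
    rcases m with _ | m
    · simp
    · simp
      field_simp
      ring
  have := (key (-(k + 1)) (by simpa [sub_eq_add_neg] using h1)).add (key (k + 1) h2)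
  simp only [← sub_eq_add_neg] at this
  convert! this using 1
  simp only [cotPolePair]
  ring

lemma abs_cotPolePair_le {m : ℕ} (hm : 2 ≤ m) (k : ℕ) {y r : ℝ} (hr : r < 1) (hy : |y| < r) :
    |cotPolePair m k y| ≤ 2 * ((1 - r) ^ m)⁻¹ * (((k : ℝ) + 1) ^ 2)⁻¹ := by
  have hk : (0 : ℝ) ≤ k := k.cast_nonneg
  have hr1 : 0 < 1 - r := by linarith
  have key : ∀ z : ℝ, (1 - r) * (k + 1) ≤ |z| →
      |(z ^ m)⁻¹| ≤ ((1 - r) ^ m)⁻¹ * (((k : ℝ) + 1) ^ 2)⁻¹ := by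
    intro z hz
    rw [abs_inv, abs_pow, ← mul_inv]
    gcongr
    calc (1 - r) ^ m * ((k : ℝ) + 1) ^ 2 ≤ (1 - r) ^ m * ((k : ℝ) + 1) ^ m := by
          gcongr
          linarith
      _ = ((1 - r) * (k + 1)) ^ m := (mul_pow _ _ _).symm
      _ ≤ |z| ^ m := by gcongr
  obtain ⟨h1, h2⟩ := abs_lt.mp hy
  calc |cotPolePair m k y| ≤ |((y - (k + 1)) ^ m)⁻¹| + |((y + (k + 1)) ^ m)⁻¹| :=
        abs_add_le _ _
    _ ≤ ((1 - r) ^ m)⁻¹ * (((k : ℝ) + 1) ^ 2)⁻¹ + ((1 - r) ^ m)⁻¹ * (((k : ℝ) + 1) ^ 2)⁻¹ := by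
        gcongr
        · apply key
          rw [le_abs]
          right
          nlinarith
        · apply key
          rw [le_abs]
          left
          nlinarith
    _ = _ := by ring

lemma hasDerivAt_tsum_cotPolePair {m : ℕ} (hm : 1 ≤ m)
    (h0 : Summable fun k => cotPolePair m k 0) {x : ℝ} (hx : |x| < 1) :
    HasDerivAt (fun y => ∑' k, cotPolePair m k y) (-m * ∑' k, cotPolePair (m + 1) k x) x := by
  obtain ⟨r, hxr, hr⟩ := exists_between hx
  have hr0 : 0 < r := (abs_nonneg x).trans_lt hxr
  rw [← tsum_mul_left]
  refine hasDerivAt_tsum_of_isPreconnected (t := Set.Ioo (-r) r) (y₀ := 0)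
    (u := fun k : ℕ => m * (2 * ((1 - r) ^ (m + 1))⁻¹ * (((k : ℝ) + 1) ^ 2)⁻¹))
    ((summable_inv_succ_sq.mul_left _).mul_left _) isOpen_Ioo isPreconnected_Ioo
    (fun k y hy => hasDerivAt_cotPolePair m k ((abs_lt.mpr hy).trans hr)) ?_
    ⟨by linarith, hr0⟩ h0 (abs_lt.mp hxr)
  intro k y hy
  rw [norm_mul, norm_neg, Real.norm_natCast]
  gcongr
  exact abs_cotPolePair_le (by lia) k hr (abs_lt.mpr hy)

lemma sin_pi_mul_ne_zero_of_abs_lt_one {x : ℝ} (h0 : x ≠ 0) (h1 : |x| < 1) :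
    sin (π * x) ≠ 0 := by
  rw [Real.sin_ne_zero_iff]
  intro n hn
  have hnx : (n : ℝ) = x := by
    have := Real.pi_ne_zero
    apply mul_right_cancel₀ this
    linarith
  rw [← hnx] at h0 h1
  have h : |n| < 1 := by exact_mod_cast h1
  exact h0 (by exact_mod_cast Int.abs_lt_one_iff.mp h)

lemma tsum_cotPolePair_one {x : ℝ} (h0 : x ≠ 0) (h1 : |x| < 1) :
    ∑' k, cotPolePair 1 k x = π * (cos (π * x) / sin (π * x)) - 1 / x := by
  have hx : (x : ℂ) ∈ Complex.integerComplement := by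
    rintro ⟨n, hn⟩
    have hnx : (n : ℝ) = x := by exact_mod_cast hn
    rw [← hnx] at h0 h1
    have h : |n| < 1 := by exact_mod_cast h1
    exact h0 (by exact_mod_cast Int.abs_lt_one_iff.mp h)
  have h := cot_series_rep' hx
  rw [Complex.cot] at h
  apply Complex.ofReal_injective
  push_cast [cotPolePair]
  rw [h]
  simp

lemma tsum_cotPolePair_two {x : ℝ} (h0 : x ≠ 0) (h1 : |x| < 1) :
    ∑' k, cotPolePair 2 k x = π ^ 2 / sin (π * x) ^ 2 - 1 / x ^ 2 := by
  have hs := sin_pi_mul_ne_zero_of_abs_lt_one h0 h1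
  have hd := hasDerivAt_tsum_cotPolePair (m := 1) le_rfl
    (by simp only [cotPolePair, zero_sub, zero_add, pow_one, inv_neg, neg_add_cancel, summable_zero])
    h1
  have hp : HasDerivAt (fun y : ℝ => π * y) π x := by
    simpa using (hasDerivAt_id x).const_mul π
  have he := ((hp.cos.div hp.sin hs).const_mul π).sub ((hasDerivAt_const x (1 : ℝ)).div
    (hasDerivAt_id x) h0)
  have hev : (fun y => ∑' k, cotPolePair 1 k y) =ᶠ[nhds x]
      fun y => π * (cos (π * y) / sin (π * y)) - 1 / y := by
    filter_upwards [isOpen_ne.mem_nhds h0, (isOpen_lt continuous_abs continuous_const).mem_nhds h1]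
      with y hy0 hy1 using tsum_cotPolePair_one hy0 hy1
  have := hd.unique (he.congr_of_eventuallyEq hev)
  simp only [id] at this
  have hsc := Real.sin_sq_add_cos_sq (π * x)
  rw [show (-((1 : ℕ) : ℝ) * ∑' k, cotPolePair (1 + 1) k x) = - ∑' k, cotPolePair 2 k x by simp,
    neg_eq_iff_eq_neg] at this
  rw [this]
  field_simp
  linear_combination π ^ 2 * x ^ 2 * hsc

lemma tsum_cotPolePair_three {x : ℝ} (h0 : x ≠ 0) (h1 : |x| < 1) :
    ∑' k, cotPolePair 3 k x = π ^ 3 * cos (π * x) / sin (π * x) ^ 3 - 1 / x ^ 3 := by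
  have hs := sin_pi_mul_ne_zero_of_abs_lt_one h0 h1
  have hd := hasDerivAt_tsum_cotPolePair (m := 2) one_le_two
    (by simpa only [cotPolePair, zero_sub, zero_add, neg_sq, ← two_mul]
      using summable_inv_succ_sq.mul_left 2) h1
  have hp : HasDerivAt (fun y : ℝ => π * y) π x := by
    simpa using (hasDerivAt_id x).const_mul π
  have he := ((hasDerivAt_const x (π ^ 2)).div (hp.sin.pow 2) (pow_ne_zero 2 hs)).sub
    ((hasDerivAt_const x (1 : ℝ)).div (hasDerivAt_pow 2 x) (pow_ne_zero 2 h0))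
  have hev : (fun y => ∑' k, cotPolePair 2 k y) =ᶠ[nhds x]
      fun y => π ^ 2 / sin (π * y) ^ 2 - 1 / y ^ 2 := by
    filter_upwards [isOpen_ne.mem_nhds h0, (isOpen_lt continuous_abs continuous_const).mem_nhds h1]
      with y hy0 hy1 using tsum_cotPolePair_two hy0 hy1
  have := hd.unique (he.congr_of_eventuallyEq hev)
  simp only [Nat.reduceAdd, Pi.pow_apply, Nat.cast_ofNat] at this
  have h2 : ∑' k, cotPolePair 3 k x = -(1 / 2) * (-2 * ∑' k, cotPolePair 3 k x) := by ring
  rw [h2, this]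
  field_simp
  ring

lemma hasSum_choose_mul_odd_pow {r : ℝ} (hr : |r| < 1) :
    HasSum (fun n : ℕ => ((2 * n + 3).choose (2 * n + 1) : ℝ) * r ^ (2 * n + 1))
      ((1 / (1 - r) ^ 3 - 1 / (1 + r) ^ 3) / 2) := by
  have h1 := hasSum_choose_mul_geometric_of_norm_lt_one 2 (r := r) hr
  have h2 := hasSum_choose_mul_geometric_of_norm_lt_one 2 (r := -r) (by simpa using hr)
  have h := (h1.sub h2).div_const 2
  rw [sub_neg_eq_add] at h
  have hinj : Function.Injective fun n : ℕ => 2 * n + 1 := fun a b hab => by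
    simpa using hab
  rw [← hinj.hasSum_iff] at h
  · convert! h using 2 with n
    rw [Function.comp_apply, Odd.neg_pow ⟨n, rfl⟩, Nat.choose_symm_add (a := 2 * n + 1) (b := 2)]
    ring
  · intro m hm
    have he : Even m := by
      rw [← Nat.not_odd_iff_even]
      rintro ⟨n, rfl⟩
      exact hm ⟨n, rfl⟩
    simp [he.neg_pow]

lemma hasSum_choose_mul_odd_pow_eq_cotPolePair {x : ℝ} (h1 : |x| < 1) (k : ℕ) :
    HasSum (fun n : ℕ => ((2 * n + 3).choose (2 * n + 1) : ℝ) *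
        (1 / ((k : ℝ) + 1) ^ (2 * n + 4)) * (-x) ^ (2 * n + 1)) (cotPolePair 3 k x / 2) := by
  have hk : (0 : ℝ) < k + 1 := by positivity
  obtain ⟨ha, hb⟩ := sub_succ_ne_zero_and_add_succ_ne_zero h1 k
  have hr : |-x / (k + 1)| < 1 := by
    rw [abs_div, abs_neg, abs_of_pos hk, div_lt_one hk]
    have : (0 : ℝ) ≤ k := k.cast_nonneg
    linarith
  convert! (hasSum_choose_mul_odd_pow hr).mul_left (1 / ((k : ℝ) + 1) ^ 3) using 1
  · ext n
    rw [div_pow]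
    field_simp
    ring
  · have e1 : 1 - -x / ((k : ℝ) + 1) = (x + (k + 1)) / (k + 1) := by field_simp; ring
    have e2 : 1 + -x / ((k : ℝ) + 1) = -((x - (k + 1)) / (k + 1)) := by field_simp; ring
    rw [e1, e2, cotPolePair, Odd.neg_pow (by decide)]
    field_simp
    ring

theorem zeta_cotangent_like_series (x : ℝ) (h0 : x ≠ 0) (h1 : |x| < 1) :
    ∑' n : ℕ, ((2 * n + 3).choose (2 * n + 1) : ℝ)
        * (∑' k : ℕ, (1 : ℝ) / ((k : ℝ) + 1) ^ (2 * n + 4))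
        * (-x) ^ (2 * n + 1)
      = -1 / (2 * x ^ 3) + (π ^ 3 / 2) * Real.cos (π * x) / Real.sin (π * x) ^ 3 := by
  have hsum : Summable (Function.uncurry fun n k : ℕ => ((2 * n + 3).choose (2 * n + 1) : ℝ) *
      (1 / ((k : ℝ) + 1) ^ (2 * n + 4)) * (-x) ^ (2 * n + 1)) := by
    refine Summable.of_norm_bounded (((hasSum_choose_mul_odd_pow
      (r := |x|) (by simpa using h1)).summable).mul_of_nonneg summable_inv_succ_sq
      (fun n => by positivity) (fun k => by positivity)) fun p => ?_
    have hk : (1 : ℝ) ≤ (p.2 : ℝ) + 1 := by simp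
    have hle : 1 / ((p.2 : ℝ) + 1) ^ (2 * p.1 + 4) ≤ (((p.2 : ℝ) + 1) ^ 2)⁻¹ := by
      rw [one_div]
      gcongr
      lia
    rw [Function.uncurry, norm_mul, norm_mul, norm_pow, norm_neg, Real.norm_eq_abs x, Real.norm_natCast,
      Real.norm_of_nonneg (by positivity), mul_right_comm]
    gcongr
  calc _ = ∑' n : ℕ, ∑' k : ℕ, ((2 * n + 3).choose (2 * n + 1) : ℝ) *
        (1 / ((k : ℝ) + 1) ^ (2 * n + 4)) * (-x) ^ (2 * n + 1) := by
        simp_rw [tsum_mul_right, tsum_mul_left]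
    _ = ∑' k : ℕ, ∑' n : ℕ, ((2 * n + 3).choose (2 * n + 1) : ℝ) *
        (1 / ((k : ℝ) + 1) ^ (2 * n + 4)) * (-x) ^ (2 * n + 1) := hsum.tsum_comm.symm
    _ = ∑' k : ℕ, cotPolePair 3 k x / 2 :=
        tsum_congr fun k => (hasSum_choose_mul_odd_pow_eq_cotPolePair h1 k).tsum_eq
    _ = _ := by
        rw [tsum_div_const, tsum_cotPolePair_three h0 h1]
        have hs := sin_pi_mul_ne_zero_of_abs_lt_one h0 h1
        field_simp
        ring
end
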